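/- arXiv:1101.4522 — 4 statements merged into one kernel-verified Lean document; each statement's English description precedes it below -/
import Mathlib

section
/- Let n ≥ 1 be an integer and suppose z ∈ ℝ and δ_0, …, δ_n ≥ 0 satisfy, for every m = 0, 1, …, n: z ≥ (−2)^m · 2^{−n} + ∑_{k=0}^{n} δ_k · ( ∑_{ℓ=0}^{k} (−2)^ℓ · binom(m,ℓ) · binom(n−m, k−ℓ) ), where binom(a,b) := 0 for b > a. Then for every p : {0,1}^n → ℝ with p(y) ≥ 0 for all y, ∑_y p(y) ≤ 1, ∑_{y} (∏_{i=1}^n T(x_i,y_i)) p(y) ≥ 0 for all x ∈ {0,1}^n (where T(0,0) = −2, T(0,1) = 1, T(1,0) = 1, T(1,1) = 1), and p(y) depending only on the number of 0-entries of y, one has ∑_{y∈{0,1}^n} (∏_{i=1}^n t(y_i)) p(y) ≤ z, where t(0) = −1 and t(1) = 1/2. -/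
open scoped BigOperators
open Classical
open scoped ComplexOrder

noncomputable section

/-- Partial trace over the second tensor factor:
`(ptraceSnd M) a a' = ∑ b, M (a,b) (a',b)`. -/
def ptraceSnd {α β : Type*} [Fintype β] (M : Matrix (α × β) (α × β) ℂ) : Matrix α α ℂ :=
  Matrix.of fun a a' => ∑ b : β, M (a, b) (a', b)

/-- Von Neumann entropy (in bits) of a matrix, via the eigenvalues of a Hermitian matrix
(with the convention `0 * log₂ 0 = 0`, automatic since `Real.logb 2 0 = 0`). -/
def vnEntropy {ι : Type*} [Fintype ι] [DecidableEq ι] (ρ : Matrix ι ι ℂ) : ℝ :=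
  if h : ρ.IsHermitian then -∑ i, h.eigenvalues i * Real.logb 2 (h.eigenvalues i) else 0

/-- Entanglement of formation of a bipartite (density) matrix: the infimum of the average
entropy of entanglement over all finite pure-state ensembles for `ρ`. -/
def EoF {α β : Type*} [Fintype α] [DecidableEq α] [Fintype β] [DecidableEq β]
    (ρ : Matrix (α × β) (α × β) ℂ) : ℝ :=
  sInf {E : ℝ | ∃ (k : ℕ) (p : Fin k → ℝ) (ψ : Fin k → (α × β → ℂ)),
    (∀ i, 0 ≤ p i) ∧ (∑ i, p i = 1) ∧
    (∀ i, ∑ x, Complex.normSq (ψ i x) = 1) ∧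
    (∑ i, p i • Matrix.vecMulVec (ψ i) (star (ψ i)) = ρ) ∧
    E = ∑ i, p i * vnEntropy (ptraceSnd (Matrix.vecMulVec (ψ i) (star (ψ i))))}

/-- The antisymmetric projector `P₂^{(d)} = (1/2)(𝟙 - F)` on `ℂ^d ⊗ ℂ^d`. -/
def asymProj (d : ℕ) : Matrix (Fin d × Fin d) (Fin d × Fin d) ℂ :=
  Matrix.of fun p q => (1 / 2 : ℂ) *
    ((if p.1 = q.1 ∧ p.2 = q.2 then 1 else 0) - (if p.1 = q.2 ∧ p.2 = q.1 then 1 else 0))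

/-- The antisymmetric state `α_d = P₂^{(d)} / binom(d,2)`. -/
def antisymState (d : ℕ) : Matrix (Fin d × Fin d) (Fin d × Fin d) ℂ :=
  (1 / (Nat.choose d 2 : ℂ)) • asymProj d

/-- `α_d^{⊗n}`, viewed as a bipartite state on `((ℂ^d)^{⊗n})_A ⊗ ((ℂ^d)^{⊗n})_B`
(the `n` first tensor factors grouped on the `A` side, the `n` second ones on the `B` side). -/
def alphaPow (d n : ℕ) :
    Matrix ((Fin n → Fin d) × (Fin n → Fin d)) ((Fin n → Fin d) × (Fin n → Fin d)) ℂ :=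
  Matrix.of fun p q => ∏ i : Fin n, antisymState d (p.1 i, p.2 i) (q.1 i, q.2 i)

/-- `(P₂^{(d)})^{⊗n}`, viewed as an operator on `((ℂ^d)^{⊗n})_A ⊗ ((ℂ^d)^{⊗n})_B`
(the `n` first tensor factors grouped on the `A` side, the `n` second ones on the `B` side). -/
def asymPow (d n : ℕ) :
    Matrix ((Fin n → Fin d) × (Fin n → Fin d)) ((Fin n → Fin d) × (Fin n → Fin d)) ℂ :=
  Matrix.of fun p q => ∏ i : Fin n, asymProj d (p.1 i, p.2 i) (q.1 i, q.2 i)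

/-- The antisymmetrizer `P_k^{(d)} = (1/k!) ∑_{σ ∈ S_k} sgn(σ) U_σ` on `(ℂ^d)^{⊗k}`. -/
def asymProjK (d k : ℕ) : Matrix (Fin k → Fin d) (Fin k → Fin d) ℂ :=
  Matrix.of fun f g => (1 / (Nat.factorial k) : ℂ) *
    ∑ σ : Equiv.Perm (Fin k), ((Equiv.Perm.sign σ : ℤ) : ℂ) * (if f = g ∘ σ then 1 else 0)

/-- Quantum conditional mutual information `I(A;B|E) = H(AE) + H(BE) - H(ABE) - H(E)`
(in bits) of a tripartite (density) matrix. -/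
def condMutInfo {α β γ : Type*} [Fintype α] [DecidableEq α] [Fintype β] [DecidableEq β]
    [Fintype γ] [DecidableEq γ] (ρ : Matrix ((α × β) × γ) ((α × β) × γ) ℂ) : ℝ :=
  vnEntropy (Matrix.of fun p q : α × γ => ∑ b : β, ρ ((p.1, b), p.2) ((q.1, b), q.2))
  + vnEntropy (Matrix.of fun p q : β × γ => ∑ a : α, ρ ((a, p.1), p.2) ((a, q.1), q.2))
  - vnEntropy ρ
  - vnEntropy (Matrix.of fun e e' : γ => ∑ a : α, ∑ b : β, ρ ((a, b), e) ((a, b), e'))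

/-- Squashed entanglement: `E_sq(ρ_AB) = inf (1/2) I(A;B|E)` over all finite-dimensional
extensions `ρ_ABE` of `ρ_AB`. -/
def Esq {α β : Type*} [Fintype α] [DecidableEq α] [Fintype β] [DecidableEq β]
    (ρ : Matrix (α × β) (α × β) ℂ) : ℝ :=
  sInf {x : ℝ | ∃ (m : ℕ) (σ : Matrix ((α × β) × Fin m) ((α × β) × Fin m) ℂ),
    σ.PosSemidef ∧ σ.trace = 1 ∧ ptraceSnd σ = ρ ∧ x = (1 / 2) * condMutInfo σ}

/-- The operator norm `‖·‖_∞` of a matrix, acting on Euclidean space. -/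
def opNorm {ι : Type*} [Fintype ι] [DecidableEq ι] (M : Matrix ι ι ℂ) : ℝ :=
  ‖Matrix.toEuclideanCLM (𝕜 := ℂ) M‖

/-- A bipartite (density) matrix is separable if it is a finite convex combination of
product density matrices. -/
def IsSeparableMat {α β : Type*} [Fintype α] [Fintype β]
    (σ : Matrix (α × β) (α × β) ℂ) : Prop :=
  ∃ (k : ℕ) (p : Fin k → ℝ) (ρA : Fin k → Matrix α α ℂ) (ρB : Fin k → Matrix β β ℂ),
    (∀ i, 0 ≤ p i) ∧ (∑ i, p i = 1) ∧
    (∀ i, (ρA i).PosSemidef) ∧ (∀ i, (ρA i).trace = 1) ∧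
    (∀ i, (ρB i).PosSemidef) ∧ (∀ i, (ρB i).trace = 1) ∧
    σ = ∑ i, p i • Matrix.kroneckerMap (· * ·) (ρA i) (ρB i)

/-! A dual solution depending only on the number of zero entries, `w x = δ (zeroCount x)`, is
feasible for the full `2 ^ n`-dimensional programme: collecting the `x` with `k` zeros in
`∏ i, (T 0 (y i) * X + T 1 (y i)) = ∑ x, (∏ i, T (x i) (y i)) * X ^ zeroCount x` and
comparing coefficients of `X ^ k` turns the dual constraint at `y` into the symmetrized one at
`m = zeroCount y`. Ordinary weak duality then applies. -/

section WeakDuality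

variable {R X Y : Type*} [Semiring R] [PartialOrder R] [IsOrderedRing R] [Fintype X] [Fintype Y]

open Matrix in
lemma dotProduct_le_of_add_vecMul_le {A : Matrix X Y R} {c p : Y → R} {w : X → R} {z : R}
    (hw : 0 ≤ w) (hz : 0 ≤ z) (hdual : ∀ y, c y + (w ᵥ* A) y ≤ z)
    (hp : 0 ≤ p) (hsum : ∑ y, p y ≤ 1) (hA : 0 ≤ A *ᵥ p) : c ⬝ᵥ p ≤ z := by
  have hwA : 0 ≤ (w ᵥ* A) ⬝ᵥ p := by
    rw [← dotProduct_mulVec]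
    exact dotProduct_nonneg_of_nonneg hw hA
  calc c ⬝ᵥ p ≤ c ⬝ᵥ p + (w ᵥ* A) ⬝ᵥ p := le_add_of_nonneg_right hwA
    _ = ∑ y, (c y + (w ᵥ* A) y) * p y := by
      simp only [dotProduct, add_mul, Finset.sum_add_distrib]
    _ ≤ ∑ y, z * p y :=
      Finset.sum_le_sum fun y _ => mul_le_mul_of_nonneg_right (hdual y) (hp y)
    _ = z * ∑ y, p y := (Finset.mul_sum ..).symm
    _ ≤ z := mul_le_of_le_one_right hz hsum

end WeakDuality

lemma mul_pow_div_pow_of_le {K : Type*} [CommGroupWithZero K] {c : K} (hc : c ≠ 0) (u : K)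
    {m n : ℕ} (hmn : m ≤ n) : (u * c) ^ m / c ^ n = u ^ m * (1 / c) ^ (n - m) := by
  rw [one_div_pow, pow_sub₀ c hc hmn, mul_pow]
  field_simp

section ZeroCount

variable {ι : Type*} [Fintype ι]

/-- The number of `0`-entries of a binary string: the invariant of its orbit under coordinate
permutations, by which the symmetrized programme is indexed. -/
def zeroCount (y : ι → Fin 2) : ℕ :=
  (Finset.univ.filter fun i => y i = 0).card

lemma zeroCount_le_card (y : ι → Fin 2) : zeroCount y ≤ Fintype.card ι :=
  Finset.card_le_univ _

lemma prod_comp_eq_pow_zeroCount {M : Type*} [CommMonoid M] (f : Fin 2 → M) (y : ι → Fin 2) :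
    ∏ i, f (y i) = f 0 ^ zeroCount y * f 1 ^ (Fintype.card ι - zeroCount y) := by
  have hone : (Finset.univ.filter fun i => y i = 1).card = Fintype.card ι - zeroCount y := by
    rw [zeroCount, ← Finset.card_compl, Finset.compl_filter]
    exact congrArg _ <| Finset.filter_congr fun i _ =>
      ⟨fun h => h ▸ one_ne_zero, Fin.eq_one_of_ne_zero (y i)⟩
  rw [← Finset.prod_fiberwise' Finset.univ y f, Fin.prod_univ_two, Finset.prod_const,
    Finset.prod_const, hone, zeroCount]

end ZeroCount

/-- The tensor power `T^{⊗ι}`: the constraint matrix of the full programme, its rows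
and columns indexed by strings. -/
def tensorPow {M α β : Type*} [CommMonoid M] (ι : Type*) [Fintype ι] (T : Matrix α β M) :
    Matrix (ι → α) (ι → β) M :=
  Matrix.of fun x y => ∏ i, T (x i) (y i)

section Krawtchouk

variable {R ι : Type*} [CommSemiring R] [Fintype ι]

/-- The Krawtchouk sum of a `2 × 2` matrix `T`: the total of the entries of `T^{⊗n}` in a column
with `m` zeros over the rows with `k` zeros. The classical Krawtchouk polynomial is the case
`T = !![-1, 1; 1, 1]`. The subtractions are truncated only where a binomial coefficient
vanishes, provided `m ≤ n`. -/
def krawtchouk (T : Matrix (Fin 2) (Fin 2) R) (n k m : ℕ) : R :=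
  ∑ l ∈ Finset.range (k + 1),
    (T 0 0 ^ l * T 1 0 ^ (m - l) * m.choose l) *
      (T 0 1 ^ (k - l) * T 1 1 ^ (n - m - (k - l)) * (n - m).choose (k - l))

open Polynomial in
lemma coeff_C_mul_X_add_C_pow (a b : R) (m l : ℕ) :
    ((C a * X + C b) ^ m).coeff l = a ^ l * b ^ (m - l) * m.choose l := by
  have hscale : (C a * X + C b) ^ m = ((X + C b) ^ m).comp (C a * X) := by simp
  rw [hscale, comp_C_mul_X_coeff, coeff_X_add_C_pow]
  ring

open Polynomial in
lemma sum_C_tensorPow_mul_X_pow_zeroCount [DecidableEq ι] (T : Matrix (Fin 2) (Fin 2) R)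
    (y : ι → Fin 2) :
    ∑ x, C (tensorPow ι T x y) * X ^ zeroCount x =
      (C (T 0 0) * X + C (T 1 0)) ^ zeroCount y *
        (C (T 0 1) * X + C (T 1 1)) ^ (Fintype.card ι - zeroCount y) := by
  have hX (x : ι → Fin 2) : (X : R[X]) ^ zeroCount x = ∏ i, ![X, 1] (x i) := by
    simp [prod_comp_eq_pow_zeroCount ![(X : R[X]), 1] x]
  calc ∑ x, C (tensorPow ι T x y) * X ^ zeroCount x
      = ∑ x : ι → Fin 2, ∏ i, C (T (x i) (y i)) * ![X, 1] (x i) := by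
        simp only [hX, tensorPow, Matrix.of_apply, map_prod, Finset.prod_mul_distrib]
    _ = ∏ i, ∑ j, C (T j (y i)) * ![X, 1] j := by
        rw [Finset.prod_univ_sum, Fintype.piFinset_univ]
    _ = ∏ i, (C (T 0 (y i)) * X + C (T 1 (y i))) := by simp [Fin.sum_univ_two]
    _ = _ := prod_comp_eq_pow_zeroCount (fun j => C (T 0 j) * X + C (T 1 j)) y

open Polynomial in
lemma sum_tensorPow_filter_zeroCount_eq [DecidableEq ι] (T : Matrix (Fin 2) (Fin 2) R)
    (y : ι → Fin 2) (k : ℕ) :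
    ∑ x with zeroCount x = k, tensorPow ι T x y =
      krawtchouk T (Fintype.card ι) k (zeroCount y) := by
  have hcoeff := congrArg (coeff · k) (sum_C_tensorPow_mul_X_pow_zeroCount T y)
  simp only [finsetSum_coeff, coeff_C_mul, coeff_X_pow, mul_ite, mul_one, mul_zero] at hcoeff
  simp only [coeff_mul, Finset.Nat.sum_antidiagonal_eq_sum_range_succ_mk,
    coeff_C_mul_X_add_C_pow] at hcoeff
  rw [Finset.sum_filter, krawtchouk, ← hcoeff]
  simp only [eq_comm]

open Matrix in
lemma comp_zeroCount_vecMul_tensorPow [DecidableEq ι] (δ : ℕ → R)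
    (T : Matrix (Fin 2) (Fin 2) R) (y : ι → Fin 2) :
    ((fun x => δ (zeroCount x)) ᵥ* tensorPow ι T) y =
      ∑ k ∈ Finset.range (Fintype.card ι + 1),
        δ k * krawtchouk T (Fintype.card ι) k (zeroCount y) := by
  have hmaps : ∀ x ∈ (Finset.univ : Finset (ι → Fin 2)),
      zeroCount x ∈ Finset.range (Fintype.card ι + 1) :=
    fun x _ => Finset.mem_range_succ_iff.2 (zeroCount_le_card x)
  simp only [vecMul, dotProduct]
  rw [← Finset.sum_fiberwise_of_maps_to hmaps]
  refine Finset.sum_congr rfl fun k _ => ?_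
  rw [← sum_tensorPow_filter_zeroCount_eq, Finset.mul_sum]
  exact Finset.sum_congr rfl fun x hx => by rw [(Finset.mem_filter.1 hx).2]

end Krawtchouk

open Matrix in
theorem lp_weak_duality_general {R ι : Type*} [CommSemiring R] [PartialOrder R] [IsOrderedRing R]
    [Fintype ι] [DecidableEq ι] {T : Matrix (Fin 2) (Fin 2) R} {t : Fin 2 → R} {δ : ℕ → R} {z : R}
    {p : (ι → Fin 2) → R} (hT : ∀ j, 0 ≤ T j 1) (ht : 0 ≤ t 1)
    (hδ : ∀ k ≤ Fintype.card ι, 0 ≤ δ k)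
    (hdual : ∀ m ≤ Fintype.card ι,
      t 0 ^ m * t 1 ^ (Fintype.card ι - m) +
        ∑ k ∈ Finset.range (Fintype.card ι + 1), δ k * krawtchouk T (Fintype.card ι) k m ≤ z)
    (hp : 0 ≤ p) (hsum : ∑ y, p y ≤ 1) (hconstr : 0 ≤ tensorPow ι T *ᵥ p) :
    ∑ y, (∏ i, t (y i)) * p y ≤ z := by
  let w : (ι → Fin 2) → R := fun x => δ (zeroCount x)
  have hw : 0 ≤ w := fun x => hδ _ (zeroCount_le_card x)
  have hfeasible (y : ι → Fin 2) : ∏ i, t (y i) + (w ᵥ* tensorPow ι T) y ≤ z := by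
    rw [prod_comp_eq_pow_zeroCount, comp_zeroCount_vecMul_tensorPow]
    exact hdual _ (zeroCount_le_card y)
  -- Only the nonnegative `T · 1` and `t 1` enter the dual constraint at the all-ones string.
  have hz : 0 ≤ z := by
    refine le_trans (add_nonneg ?_ ?_) (hfeasible fun _ => 1)
    · exact Finset.prod_nonneg fun _ _ => ht
    · exact dotProduct_nonneg_of_nonneg hw fun x => Finset.prod_nonneg fun i _ => hT (x i)
  exact dotProduct_le_of_add_vecMul_le hw hz hfeasible hp hsum hconstr

/-- weak duality for the symmetrized linear programme: any `z` and
`δ_0, …, δ_n ≥ 0` satisfying the symmetrized dual constraints upper-bound the objective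
of any symmetric primal-feasible point `p`. -/
theorem lp_weak_duality (n : ℕ) (hn : 1 ≤ n) (z : ℝ) (δ : ℕ → ℝ)
    (hδ : ∀ k ≤ n, 0 ≤ δ k)
    (hdual : ∀ m ≤ n,
      (-2 : ℝ) ^ m / 2 ^ n +
        ∑ k ∈ Finset.range (n + 1), δ k *
          (∑ l ∈ Finset.range (k + 1),
            (-2 : ℝ) ^ l * (Nat.choose m l) * (Nat.choose (n - m) (k - l))) ≤ z)
    (p : (Fin n → Fin 2) → ℝ)
    (hpos : ∀ y, 0 ≤ p y)
    (hsum : ∑ y, p y ≤ 1)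
    (hconstr : ∀ x : Fin n → Fin 2,
      0 ≤ ∑ y, (∏ i, (!![(-2 : ℝ), 1; 1, 1]) (x i) (y i)) * p y)
    (hsymm : ∀ y y' : Fin n → Fin 2,
      (Finset.univ.filter fun i => y i = 0).card =
        (Finset.univ.filter fun i => y' i = 0).card → p y = p y') :
    ∑ y, (∏ i, (![(-1 : ℝ), 1 / 2]) (y i)) * p y ≤ z := by
  have hobj {m : ℕ} (hm : m ≤ n) : (-1 : ℝ) ^ m * (1 / 2) ^ (n - m) = (-2) ^ m / 2 ^ n := by
    rw [← mul_pow_div_pow_of_le two_ne_zero _ hm, neg_one_mul]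
  refine lp_weak_duality_general (T := !![-2, 1; 1, 1]) (t := ![-1, 1 / 2]) (δ := δ)
    (Fin.forall_fin_two.2 (by simp)) (by simp) (by simpa using hδ) ?_ hpos hsum hconstr
  rw [Fintype.card_fin]
  intro m hm
  simpa [krawtchouk, hobj hm, -one_div] using hdual m hm

end
end

section
/- Let n ≥ 1 be an integer. Let T_∞ be the 3×3 real matrix with rows (1, 1, −1), (−2, 1, 0), (1, 1, 1) (rows indexed by x ∈ {0,1,2}, columns by y ∈ {0,1,2}), and let s : {0,1,2} → ℝ be s(0) = −1, s(1) = 1/2, s(2) = 0. Then for every p : {0,1,2}^n → ℝ with p(y) ≥ 0 for all y, ∑_y p(y) = 1, and ∑_{y∈{0,1,2}^n} (∏_{i=1}^n T_∞(x_i, y_i)) p(y) ≥ 0 for all x ∈ {0,1,2}^n, one has ∑_{y∈{0,1,2}^n} (∏_{i=1}^n s(y_i)) p(y) ≤ ζ_n, where ζ_n is the optimum of the reduced linear programme: the maximum of ∑_{y∈{0,1}^n} (∏_{i=1}^n t(y_i)) q(y) over q : {0,1}^n → ℝ with q ≥ 0, ∑_y q(y) ≤ 1, and ∑_y (∏_i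 T(x_i,y_i)) q(y) ≥ 0 for all x ∈ {0,1}^n, with t(0) = −1, t(1) = 1/2 and T the 2×2 matrix with rows (−2, 1) and (1, 1). In particular the objective is at most (3/4)^n. -/
open scoped BigOperators
open Classical
open scoped ComplexOrder

noncomputable section

/-!
Constraint rows and objectives of both programmes are products over the coordinates, so nonnegative
combinations of rows may be taken one coordinate at a time. Half the sum of rows `0` and `2` of
`T_∞` is `(1, 1, 0)`, and row `1` is `(-2, 1, 0)`: these are the rows of the `2 × 2` matrix `T`,
padded with a zero in the last column. The objective `s` vanishes in that column too, so restricting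
`p` to the words over `{0, 1}` gives a feasible point of the two-symbol programme of the same value.

For the two-symbol programme, `1/2 • (-2, 1) = t` and `1/2 • (-2, 1) + 1/4 • (1, 1) = (-3/4, 3/4)`.
In the `n`-th tensor power of the second identity the left side expands into nonnegative multiples
of constraints, one of which is the objective `t^{⊗n}`, and the right side has entries of absolute
value `(3/4)^n`.
-/

open Finset Matrix

variable {ι κ κ' m m' R : Type*}

section Pairing

variable [Fintype ι] [DecidableEq ι] [Fintype κ] [CommSemiring R]

/-- The pairing `⟨⨂ᵢ fᵢ, p⟩` of a product functional with a tensor `p`, whose entries are indexed by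
the words `ι → κ`. Constraints and objectives of Kronecker power programmes have this form. -/
def tensorPairing (f : ι → κ → R) (p : (ι → κ) → R) : R :=
  ∑ y, (∏ i, f i (y i)) * p y

theorem tensorPairing_smul (a : ι → R) (f : ι → κ → R) (p : (ι → κ) → R) :
    tensorPairing (fun i => a i • f i) p = (∏ i, a i) * tensorPairing f p := by
  simp only [tensorPairing, Pi.smul_apply, smul_eq_mul, prod_mul_distrib, mul_sum, mul_assoc]

theorem tensorPairing_vecMul [Fintype m] (c : ι → m → R) (A : Matrix m κ R) (p : (ι → κ) → R) :
    tensorPairing (fun i => c i ᵥ* A) p =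
      ∑ x : ι → m, (∏ i, c i (x i)) * tensorPairing (fun i => A (x i)) p := by
  simp only [tensorPairing, vecMul, dotProduct, prod_univ_sum, Fintype.piFinset_univ, sum_mul,
    mul_sum, prod_mul_distrib, mul_assoc]
  exact sum_comm

theorem tensorPairing_comp_of_injective [Fintype κ'] {e : κ' → κ} (he : e.Injective)
    {f : ι → κ → R} (hf : ∀ i, ∀ y ∉ Set.range e, f i y = 0) (p : (ι → κ) → R) :
    tensorPairing (fun i => f i ∘ e) (fun z => p (e ∘ z)) = tensorPairing f p := by
  refine Fintype.sum_of_injective (e ∘ ·) he.comp_left _ _ (fun y hy => ?_) fun _ => rfl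
  obtain ⟨i, hi⟩ : ∃ i, y i ∉ Set.range e := by
    contrapose! hy
    choose z hz using hy
    exact ⟨z, funext hz⟩
  rw [prod_eq_zero (mem_univ i) (hf i _ hi), zero_mul]

end Pairing

theorem tensorPairing_le_pow_card [Fintype ι] [DecidableEq ι] [Fintype κ]
    [CommRing R] [LinearOrder R] [IsStrictOrderedRing R] {f : ι → κ → R} {r : R} (hr : 0 ≤ r)
    (hf : ∀ i y, |f i y| ≤ r) {p : (ι → κ) → R} (hp : ∀ y, 0 ≤ p y) (hsum : ∑ y, p y ≤ 1) :
    tensorPairing f p ≤ r ^ Fintype.card ι := by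
  have hprod (y : ι → κ) : ∏ i, f i (y i) ≤ r ^ Fintype.card ι :=
    calc ∏ i, f i (y i) ≤ ∏ i, |f i (y i)| := (le_abs_self _).trans_eq (abs_prod _ _)
      _ ≤ ∏ _i : ι, r := prod_le_prod (fun _ _ => abs_nonneg _) fun i _ => hf i (y i)
      _ = r ^ Fintype.card ι := by rw [prod_const, card_univ]
  calc tensorPairing f p
      ≤ ∑ y, r ^ Fintype.card ι * p y :=
        sum_le_sum fun y _ => mul_le_mul_of_nonneg_right (hprod y) (hp y)
    _ = r ^ Fintype.card ι * ∑ y, p y := (mul_sum _ _ _).symm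
    _ ≤ r ^ Fintype.card ι := mul_le_of_le_one_right (pow_nonneg hr _) hsum

/-- Feasibility of `p` for the linear programme whose constraint matrix is the Kronecker power of
`A` over the coordinates `ι`. The total mass is only required to be at most `1`, so that feasibility
survives restriction to a smaller alphabet. -/
structure KroneckerFeasible [Fintype ι] [DecidableEq ι] [Fintype κ] [CommSemiring R] [LE R]
    (A : Matrix m κ R) (p : (ι → κ) → R) : Prop where
  nonneg : ∀ y, 0 ≤ p y
  sum_le_one : ∑ y, p y ≤ 1
  constraint : ∀ x : ι → m, 0 ≤ tensorPairing (fun i => A (x i)) p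

namespace KroneckerFeasible

variable [Fintype ι] [DecidableEq ι] [Fintype κ] {A : Matrix m κ R} {p : (ι → κ) → R}

section OrderedSemiring

variable [CommSemiring R] [PartialOrder R] [IsOrderedRing R]

theorem prod_mul_tensorPairing_nonneg (h : KroneckerFeasible A p) {c : ι → m → R}
    (hc : ∀ i j, 0 ≤ c i j) (x : ι → m) :
    0 ≤ (∏ i, c i (x i)) * tensorPairing (fun i => A (x i)) p :=
  mul_nonneg (prod_nonneg fun i _ => hc i (x i)) (h.constraint x)

theorem tensorPairing_vecMul_nonneg [Fintype m] (h : KroneckerFeasible A p) {c : ι → m → R}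
    (hc : ∀ i j, 0 ≤ c i j) : 0 ≤ tensorPairing (fun i => c i ᵥ* A) p := by
  rw [tensorPairing_vecMul]
  exact sum_nonneg fun x _ => h.prod_mul_tensorPairing_nonneg hc x

theorem tensorPairing_smul_row_le_vecMul [Fintype m] (h : KroneckerFeasible A p)
    {c : ι → m → R} (hc : ∀ i j, 0 ≤ c i j) (x : ι → m) :
    tensorPairing (fun i => c i (x i) • A (x i)) p ≤ tensorPairing (fun i => c i ᵥ* A) p := by
  rw [tensorPairing_smul, tensorPairing_vecMul]
  exact single_le_sum (f := fun x => (∏ i, c i (x i)) * tensorPairing (fun i => A (x i)) p)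
    (fun x _ => h.prod_mul_tensorPairing_nonneg hc x) (mem_univ x)

theorem comp_of_injective [Fintype κ'] [Fintype m] (h : KroneckerFeasible A p)
    {e : κ' → κ} (he : e.Injective) {C : Matrix m' m R} (hC : ∀ j k, 0 ≤ C j k)
    (hzero : ∀ j, ∀ y ∉ Set.range e, (C * A) j y = 0) :
    KroneckerFeasible ((C * A).submatrix id e) fun z : ι → κ' => p (e ∘ z) where
  nonneg z := h.nonneg (e ∘ z)
  sum_le_one :=
    calc ∑ z : ι → κ', p (e ∘ z) = ∑ y ∈ univ.map ⟨(e ∘ ·), he.comp_left⟩, p y :=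
          (sum_map univ ⟨(e ∘ ·), he.comp_left⟩ p).symm
      _ ≤ ∑ y, p y := sum_le_univ_sum_of_nonneg h.nonneg
      _ ≤ 1 := h.sum_le_one
  constraint x :=
    calc 0 ≤ tensorPairing (fun i => C (x i) ᵥ* A) p :=
          h.tensorPairing_vecMul_nonneg fun i => hC (x i)
      _ = tensorPairing (fun i => (C * A).submatrix id e (x i)) fun z => p (e ∘ z) :=
          (tensorPairing_comp_of_injective he (fun i => hzero (x i)) p).symm

end OrderedSemiring

theorem tensorPairing_smul_row_le_pow_card [Fintype m] [CommRing R] [LinearOrder R]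
    [IsStrictOrderedRing R] (h : KroneckerFeasible A p) {c : ι → m → R} (hc : ∀ i j, 0 ≤ c i j)
    {r : R} (hr : 0 ≤ r) (hcA : ∀ i y, |(c i ᵥ* A) y| ≤ r) (x : ι → m) :
    tensorPairing (fun i => c i (x i) • A (x i)) p ≤ r ^ Fintype.card ι :=
  (h.tensorPairing_smul_row_le_vecMul hc x).trans
    (tensorPairing_le_pow_card hr hcA h.nonneg h.sum_le_one)

end KroneckerFeasible

/-- The matrix `T_∞` of the three-symbol programme. -/
def threeSymbolMatrix : Matrix (Fin 3) (Fin 3) ℝ := !![1, 1, -1; -2, 1, 0; 1, 1, 1]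

/-- The one-letter objective `s` of the three-symbol programme. -/
def threeSymbolObjective : Fin 3 → ℝ := ![-1, 1 / 2, 0]

/-- The matrix `T` of the reduced two-symbol programme. -/
def twoSymbolMatrix : Matrix (Fin 2) (Fin 2) ℝ := !![-2, 1; 1, 1]

/-- The one-letter objective `t` of the reduced two-symbol programme. -/
def twoSymbolObjective : Fin 2 → ℝ := ![-1, 1 / 2]

/-- The row operations on `T_∞` that produce the rows of `T`, padded by a zero column. -/
def rowReduction : Matrix (Fin 2) (Fin 3) ℝ := !![0, 1, 0; 1 / 2, 0, 1 / 2]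

theorem rowReduction_nonneg (j : Fin 2) (k : Fin 3) : 0 ≤ rowReduction j k := by
  fin_cases j <;> fin_cases k <;> norm_num [rowReduction]

theorem rowReduction_mul_threeSymbolMatrix :
    rowReduction * threeSymbolMatrix = !![-2, 1, 0; 1, 1, 0] := by
  norm_num [rowReduction, threeSymbolMatrix]

theorem submatrix_rowReduction_mul_threeSymbolMatrix :
    (rowReduction * threeSymbolMatrix).submatrix id Fin.castSucc = twoSymbolMatrix := by
  rw [rowReduction_mul_threeSymbolMatrix]
  ext j y
  fin_cases j <;> fin_cases y <;> rfl

theorem threeSymbolObjective_comp_castSucc :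
    threeSymbolObjective ∘ Fin.castSucc = twoSymbolObjective := by
  ext y
  fin_cases y <;> rfl

theorem eq_two_of_notMem_range_castSucc {y : Fin 3}
    (hy : y ∉ Set.range (Fin.castSucc : Fin 2 → Fin 3)) : y = 2 := by
  contrapose! hy
  exact ⟨y.castPred hy, y.castSucc_castPred hy⟩

section Reduction

variable [Fintype ι] [DecidableEq ι]

theorem KroneckerFeasible.twoSymbol_of_threeSymbol {p : (ι → Fin 3) → ℝ}
    (h : KroneckerFeasible threeSymbolMatrix p) :
    KroneckerFeasible twoSymbolMatrix fun z : ι → Fin 2 => p (Fin.castSucc ∘ z) := by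
  rw [← submatrix_rowReduction_mul_threeSymbolMatrix]
  refine h.comp_of_injective (Fin.castSucc_injective 2) rowReduction_nonneg fun j y hy => ?_
  rw [eq_two_of_notMem_range_castSucc hy, rowReduction_mul_threeSymbolMatrix]
  fin_cases j <;> rfl

theorem tensorPairing_threeSymbolObjective (p : (ι → Fin 3) → ℝ) :
    tensorPairing (fun _ => threeSymbolObjective) p =
      tensorPairing (fun _ => twoSymbolObjective) fun z => p (Fin.castSucc ∘ z) := by
  rw [← threeSymbolObjective_comp_castSucc]
  refine (tensorPairing_comp_of_injective (Fin.castSucc_injective 2) (fun _ y hy => ?_) p).symm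
  rw [eq_two_of_notMem_range_castSucc hy]
  rfl

theorem KroneckerFeasible.tensorPairing_twoSymbolObjective_le {q : (ι → Fin 2) → ℝ}
    (h : KroneckerFeasible twoSymbolMatrix q) :
    tensorPairing (fun _ => twoSymbolObjective) q ≤ (3 / 4) ^ Fintype.card ι := by
  let c : Fin 2 → ℝ := ![1 / 2, 1 / 4]
  have hc (j : Fin 2) : 0 ≤ c j := by fin_cases j <;> norm_num [c]
  have hobjective : twoSymbolObjective = c 0 • twoSymbolMatrix 0 := by
    ext y
    fin_cases y <;> norm_num [c, twoSymbolObjective, twoSymbolMatrix]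
  have hcT : c ᵥ* twoSymbolMatrix = ![-3 / 4, 3 / 4] := by
    ext y
    fin_cases y <;> norm_num [c, twoSymbolMatrix, vecMul, dotProduct]
  have habs (y : Fin 2) : |(c ᵥ* twoSymbolMatrix) y| ≤ 3 / 4 := by
    rw [hcT]
    fin_cases y <;> norm_num [abs_div]
  rw [hobjective]
  exact h.tensorPairing_smul_row_le_pow_card (fun _ => hc) (by norm_num) (fun _ => habs) fun _ => 0

end Reduction

/-- the three-symbol linear programme (constraint matrix `T_∞^{⊗n}`,
objective `s^{⊗n}`) is dominated by the reduced two-symbol programme `ζ_n`; in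
particular its objective is at most `(3/4)^n`. -/
theorem lp_three_symbol_reduction (n : ℕ) (hn : 1 ≤ n)
    (p : (Fin n → Fin 3) → ℝ)
    (hpos : ∀ y, 0 ≤ p y)
    (hsum : ∑ y, p y = 1)
    (hconstr : ∀ x : Fin n → Fin 3,
      0 ≤ ∑ y, (∏ i, (!![(1 : ℝ), 1, -1; -2, 1, 0; 1, 1, 1]) (x i) (y i)) * p y) :
    (∑ y, (∏ i, (![(-1 : ℝ), 1 / 2, 0]) (y i)) * p y ≤
      sSup {v : ℝ | ∃ q : (Fin n → Fin 2) → ℝ,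
        (∀ y, 0 ≤ q y) ∧ (∑ y, q y ≤ 1) ∧
        (∀ x : Fin n → Fin 2,
          0 ≤ ∑ y, (∏ i, (!![(-2 : ℝ), 1; 1, 1]) (x i) (y i)) * q y) ∧
        v = ∑ y, (∏ i, (![(-1 : ℝ), 1 / 2]) (y i)) * q y}) ∧
    (∑ y, (∏ i, (![(-1 : ℝ), 1 / 2, 0]) (y i)) * p y ≤ (3 / 4 : ℝ) ^ n) := by
  have hp : KroneckerFeasible threeSymbolMatrix p := ⟨hpos, hsum.le, hconstr⟩
  have hq := hp.twoSymbol_of_threeSymbol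
  have hbound {q : (Fin n → Fin 2) → ℝ} (h : KroneckerFeasible twoSymbolMatrix q) :
      tensorPairing (fun _ => twoSymbolObjective) q ≤ (3 / 4 : ℝ) ^ n := by
    simpa only [Fintype.card_fin] using h.tensorPairing_twoSymbolObjective_le
  have hvalue := tensorPairing_threeSymbolObjective p
  refine ⟨hvalue.trans_le (le_csSup ⟨(3 / 4) ^ n, ?_⟩ ?_), hvalue.trans_le (hbound hq)⟩
  · rintro _ ⟨q, hq₀, hq₁, hqT, rfl⟩
    exact hbound ⟨hq₀, hq₁, hqT⟩
  · exact ⟨_, hq.nonneg, hq.sum_le_one, hq.constraint, rfl⟩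

end
end

section
/- For all integers 2 ≤ k ≤ d, the density operator ρ = P_k^{(d)}/binom(d,k) on (ℂ^d)^{⊗k}, with system A the first tensor factor, system B the second, and system E the remaining k−2 factors, satisfies I(A;B|E)_ρ = log₂( binom(d,k−1)² / (binom(d,k−2)·binom(d,k)) ) = log₂( (k/(k−1)) · ((d−k+2)/(d−k+1)) ), where I(A;B|E) = H(ρ_{AE}) + H(ρ_{BE}) − H(ρ_{ABE}) − H(ρ_E) is the quantum conditional mutual information. -/
open scoped BigOperators
open Classical
open scoped ComplexOrder

noncomputable section

/-!
The entry of `P_k^{(d)}` at `(f, g)` is `1/k!` times the minor of the identity matrix with rows `f`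
and columns `g`. Prepending the same index `a` to rows and columns leaves such a minor unchanged
if `a` is not a value of `f` and makes it vanish otherwise, so tracing out one factor of
`P_{k+1}^{(d)}` gives `(d - k)/(k + 1) • P_k^{(d)}`. Hence every marginal of the antisymmetric state
is again an antisymmetric state, by permutation invariance whichever factor is traced out. The
antisymmetric state on `j ≤ d` factors is a normalised projection of rank `binom(d,j)`, whose
entropy is `log₂ binom(d,j)`.
-/

section Entropy

variable {ι : Type*} [Fintype ι] [DecidableEq ι] {M : Matrix ι ι ℂ} {c : ℝ}

open Polynomial in
theorem eigenvalues_eq_zero_or_eq_of_mul_self (hM : M.IsHermitian)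
    (hsq : M * M = (c : ℂ) • M) (i : ι) : hM.eigenvalues i = 0 ∨ hM.eigenvalues i = c := by
  have : Nonempty ι := ⟨i⟩
  have hroot : aeval M (X ^ 2 - C c * X) = 0 := by
    simp [pow_two, hsq, Algebra.algebraMap_eq_smul_one, Complex.coe_smul]
  have hmem := spectrum.subset_polynomial_aeval M (X ^ 2 - C c * X)
    ⟨_, hM.eigenvalues_mem_spectrum_real i, rfl⟩
  rw [hroot, spectrum.zero_eq, Set.mem_singleton_iff] at hmem
  have hfactor : hM.eigenvalues i * (hM.eigenvalues i - c) = 0 := by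
    simp only [eval_sub, eval_pow, eval_mul, eval_X, eval_C] at hmem
    linear_combination hmem
  exact (mul_eq_zero.mp hfactor).imp_right sub_eq_zero.mp

theorem vnEntropy_of_mul_self (hM : M.IsHermitian) (hsq : M * M = (c : ℂ) • M) :
    vnEntropy M = -(M.trace.re * Real.logb 2 c) := by
  have hterm (i : ι) : hM.eigenvalues i * Real.logb 2 (hM.eigenvalues i)
      = hM.eigenvalues i * Real.logb 2 c := by
    rcases eigenvalues_eq_zero_or_eq_of_mul_self hM hsq i with h | h <;> simp [h]
  rw [vnEntropy, dif_pos hM, Finset.sum_congr rfl fun i _ => hterm i, ← Finset.sum_mul,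
    hM.trace_eq_sum_eigenvalues]
  simp

end Entropy

section IdentityMinors

open Matrix

variable {R α : Type*} [CommRing R] [DecidableEq α] {k : ℕ}

theorem det_one_submatrix_of_not_injective {f : Fin k → α} (hf : ¬ f.Injective)
    (g : Fin k → α) : ((1 : Matrix α α R).submatrix f g).det = 0 := by
  obtain ⟨i, j, hij, hne⟩ := Function.not_injective_iff.mp hf
  exact det_zero_of_row_eq hne (by ext; simp only [submatrix_apply, one_apply, hij])

theorem det_one_submatrix_cons_of_notMem {a : α} {f : Fin k → α} (ha : a ∉ Set.range f)
    (g : Fin k → α) :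
    ((1 : Matrix α α R).submatrix (Fin.cons a f : Fin (k + 1) → α) (Fin.cons a g)).det
      = ((1 : Matrix α α R).submatrix f g).det := by
  have hfa (i : Fin k) : f i ≠ a := fun h => ha ⟨i, h⟩
  rw [det_succ_column_zero, Fin.sum_univ_succ]
  simp [one_apply, hfa, Function.comp_def]

theorem sum_det_one_submatrix_cons [Fintype α] (f g : Fin k → α) :
    ∑ a, ((1 : Matrix α α R).submatrix (Fin.cons a f : Fin (k + 1) → α) (Fin.cons a g)).det
      = ((Fintype.card α : R) - k) * ((1 : Matrix α α R).submatrix f g).det := by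
  by_cases hf : f.Injective
  · have hterm (a : α) :
        ((1 : Matrix α α R).submatrix (Fin.cons a f : Fin (k + 1) → α) (Fin.cons a g)).det
          = if a ∈ (Finset.univ.image f)ᶜ then ((1 : Matrix α α R).submatrix f g).det else 0 := by
      split_ifs with ha
      · exact det_one_submatrix_cons_of_notMem (by simpa using ha) g
      · refine det_one_submatrix_of_not_injective (fun h => ha ?_) _
        simpa using (Fin.cons_injective_iff.mp h).1
    have hcard : ((Finset.univ.image f)ᶜ.card : R) = Fintype.card α - k := by
      rw [Finset.card_compl, Nat.cast_sub (Finset.card_le_univ _),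
        Finset.card_image_of_injective _ hf, Finset.card_univ, Fintype.card_fin]
    rw [Finset.sum_congr rfl fun a _ => hterm a, Finset.sum_ite_mem, Finset.univ_inter,
      Finset.sum_const, nsmul_eq_mul, hcard]
  · have hcons (a : α) : ¬ (Fin.cons a f : Fin (k + 1) → α).Injective :=
      fun h => hf (Fin.cons_injective_iff.mp h).2
    simp [det_one_submatrix_of_not_injective hf, det_one_submatrix_of_not_injective (hcons _)]

end IdentityMinors

theorem cast_choose_succ_mul {R : Type*} [Ring R] (d k : ℕ) :
    (d.choose (k + 1) : R) * (k + 1) = d.choose k * (d - k) := by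
  rcases le_or_gt k d with h | h
  · rw [← Nat.cast_sub h]
    exact_mod_cast congrArg (Nat.cast (R := R)) (Nat.choose_succ_right_eq d k)
  · simp [Nat.choose_eq_zero_of_lt h, Nat.choose_eq_zero_of_lt (h.trans k.lt_succ_self)]

theorem choose_sq_div_choose_mul_choose {d m : ℕ} (hmd : m + 2 ≤ d) :
    (d.choose (m + 1) : ℝ) ^ 2 / (d.choose m * d.choose (m + 2))
      = ((m + 2) / (m + 1)) * ((d - m) / (d - m - 1)) := by
  have hm : (d.choose m : ℝ) ≠ 0 := by exact_mod_cast (Nat.choose_pos (by lia)).ne'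
  have hm₂ : (d.choose (m + 2) : ℝ) ≠ 0 := by exact_mod_cast (Nat.choose_pos hmd).ne'
  have hd : (d : ℝ) - m - 1 ≠ 0 := by
    have : (m : ℝ) + 2 ≤ d := by exact_mod_cast hmd
    linarith
  have hstep := cast_choose_succ_mul (R := ℝ) d m
  have hstep₁ := cast_choose_succ_mul (R := ℝ) d (m + 1)
  push_cast at hstep₁
  rw [div_mul_div_comm, div_eq_div_iff (by positivity) (mul_ne_zero (by positivity) hd)]
  linear_combination (d.choose (m + 1) * ((d : ℝ) - m - 1)) * hstep
    - (d.choose m * ((d : ℝ) - m)) * hstep₁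

section Antisymmetrizer

open Matrix Equiv

variable {d k : ℕ}

theorem asymProjK_apply_eq_det (f g : Fin k → Fin d) :
    asymProjK d k f g
      = (k.factorial : ℂ)⁻¹ * ((1 : Matrix (Fin d) (Fin d) ℂ).submatrix f g).det := by
  have hprod (σ : Perm (Fin k)) :
      (if f = g ∘ σ then 1 else 0 : ℂ) = ∏ i, if f i = g (σ i) then 1 else 0 := by
    simp [Finset.prod_ite_zero, funext_iff]
  rw [← det_transpose, det_apply', asymProjK, of_apply, one_div]
  simp only [hprod, transpose_apply, submatrix_apply, one_apply]

theorem asymProjK_comp_perm_left (σ : Perm (Fin k)) (f g : Fin k → Fin d) :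
    asymProjK d k (f ∘ σ) g = (Perm.sign σ : ℂ) * asymProjK d k f g := by
  have hperm := det_permute σ ((1 : Matrix (Fin d) (Fin d) ℂ).submatrix f g)
  rw [submatrix_submatrix, Function.comp_id] at hperm
  rw [asymProjK_apply_eq_det, asymProjK_apply_eq_det, hperm, mul_left_comm]

theorem asymProjK_comp_perm (σ : Perm (Fin k)) (f g : Fin k → Fin d) :
    asymProjK d k (f ∘ σ) (g ∘ σ) = asymProjK d k f g := by
  rw [asymProjK_apply_eq_det, asymProjK_apply_eq_det, ← submatrix_submatrix,
    det_submatrix_equiv_self]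

theorem isHermitian_asymProjK : (asymProjK d k).IsHermitian := by
  ext f g
  rw [conjTranspose_apply, asymProjK_apply_eq_det, asymProjK_apply_eq_det, star_mul',
    ← det_conjTranspose, conjTranspose_submatrix, conjTranspose_one]
  simp

/-- The operator `U_σ` permuting the tensor factors of `(ℂ^d)^{⊗k}`, with the same orientation
as in `asymProjK`. -/
def tensorPerm (d : ℕ) (σ : Perm (Fin k)) : Matrix (Fin k → Fin d) (Fin k → Fin d) ℂ :=
  (1 : Matrix (Fin k → Fin d) (Fin k → Fin d) ℂ).submatrix id (· ∘ σ)

theorem asymProjK_eq_sum_tensorPerm :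
    asymProjK d k
      = (k.factorial : ℂ)⁻¹ • ∑ σ : Perm (Fin k), (Perm.sign σ : ℂ) • tensorPerm d σ := by
  ext f g
  simp [asymProjK, tensorPerm, Matrix.sum_apply, Matrix.smul_apply, one_apply]

theorem tensorPerm_mul_asymProjK (σ : Perm (Fin k)) :
    tensorPerm d σ * asymProjK d k = (Perm.sign σ : ℂ) • asymProjK d k := by
  have hshift : tensorPerm d σ * asymProjK d k = (asymProjK d k).submatrix (· ∘ ⇑σ⁻¹) id :=
    one_submatrix_mul id (σ⁻¹.arrowCongr (Equiv.refl (Fin d))) (asymProjK d k)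
  ext f g
  rw [hshift, submatrix_apply, id, asymProjK_comp_perm_left, Perm.sign_inv, Matrix.smul_apply,
    smul_eq_mul]

theorem asymProjK_mul_self : asymProjK d k * asymProjK d k = asymProjK d k := by
  have hsign (σ : Perm (Fin k)) : (Perm.sign σ : ℂ) * (Perm.sign σ : ℂ) = 1 := by
    rw [← Int.cast_mul, ← Units.val_mul, Int.units_mul_self, Units.val_one, Int.cast_one]
  calc asymProjK d k * asymProjK d k
      = (k.factorial : ℂ)⁻¹ • ∑ σ : Perm (Fin k),
          (Perm.sign σ : ℂ) • (tensorPerm d σ * asymProjK d k) := by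
        conv_lhs => enter [1]; rw [asymProjK_eq_sum_tensorPerm]
        simp only [smul_mul, Matrix.sum_mul]
    _ = (k.factorial : ℂ)⁻¹ • ∑ _σ : Perm (Fin k), asymProjK d k := by
        simp only [tensorPerm_mul_asymProjK, smul_smul, hsign, one_smul]
    _ = asymProjK d k := by
        rw [Finset.sum_const, Finset.card_univ, Fintype.card_perm, Fintype.card_fin,
          ← Nat.cast_smul_eq_nsmul ℂ, inv_smul_smul₀ (mod_cast k.factorial_ne_zero)]

theorem succ_mul_sum_asymProjK_cons (f g : Fin k → Fin d) :
    ((k : ℂ) + 1) * ∑ a, asymProjK d (k + 1) (Fin.cons a f) (Fin.cons a g)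
      = (d - k) * asymProjK d k f g := by
  have hk : (k : ℂ) + 1 ≠ 0 := k.cast_add_one_ne_zero
  simp only [asymProjK_apply_eq_det, ← Finset.mul_sum, sum_det_one_submatrix_cons,
    Fintype.card_fin, Nat.factorial_succ]
  push_cast
  field_simp

theorem trace_asymProjK : (asymProjK d k).trace = d.choose k := by
  induction k with
  | zero => simp [trace, asymProjK_apply_eq_det]
  | succ k ih =>
    have hsum : (asymProjK d (k + 1)).trace
        = ∑ f, ∑ a, asymProjK d (k + 1) (Fin.cons a f) (Fin.cons a f) := by
      rw [trace, ← (Fin.consEquiv fun _ => Fin d).sum_comp, Fintype.sum_prod_type_right]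
      rfl
    refine mul_left_cancel₀ (k.cast_add_one_ne_zero (R := ℂ)) ?_
    calc ((k : ℂ) + 1) * (asymProjK d (k + 1)).trace
        = (d - k) * (asymProjK d k).trace := by
          rw [hsum, Finset.mul_sum, trace, Finset.mul_sum]
          exact Finset.sum_congr rfl fun f _ => succ_mul_sum_asymProjK_cons f f
      _ = (k + 1) * d.choose (k + 1) := by
          rw [ih, mul_comm, ← cast_choose_succ_mul, mul_comm]

end Antisymmetrizer

section AntisymmetricState

open Matrix Equiv

variable {d k m : ℕ}

/-- The antisymmetric state `P_k^{(d)} / binom(d,k)` on `(ℂ^d)^{⊗k}`; it is `0` for `d < k`. -/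
def antisymStateK (d k : ℕ) : Matrix (Fin k → Fin d) (Fin k → Fin d) ℂ :=
  (d.choose k : ℂ)⁻¹ • asymProjK d k

theorem vnEntropy_antisymStateK_submatrix {ι : Type*} [Fintype ι] [DecidableEq ι] (hkd : k ≤ d)
    (e : ι ≃ (Fin k → Fin d)) :
    vnEntropy ((antisymStateK d k).submatrix e e) = Real.logb 2 (d.choose k) := by
  have hpos : (d.choose k : ℂ) ≠ 0 := by exact_mod_cast (Nat.choose_pos hkd).ne'
  have hherm : (antisymStateK d k).IsHermitian := by
    simp [antisymStateK, IsHermitian, conjTranspose_smul, isHermitian_asymProjK.eq]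
  have hsq : (antisymStateK d k).submatrix e e * (antisymStateK d k).submatrix e e
      = (((d.choose k : ℝ)⁻¹ : ℝ) : ℂ) • (antisymStateK d k).submatrix e e := by
    rw [submatrix_mul_equiv, antisymStateK, smul_mul, Matrix.mul_smul, asymProjK_mul_self,
      submatrix_smul, Complex.ofReal_inv, Complex.ofReal_natCast]
    rfl
  have htrace : ((antisymStateK d k).submatrix e e).trace = 1 := by
    calc ((antisymStateK d k).submatrix e e).trace
        = (antisymStateK d k).trace := e.sum_comp fun f => antisymStateK d k f f
      _ = 1 := by rw [antisymStateK, trace_smul, trace_asymProjK, smul_eq_mul,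
          inv_mul_cancel₀ hpos]
  rw [vnEntropy_of_mul_self (hherm.submatrix e) hsq, htrace]
  simp

theorem sum_antisymStateK_cons (hkd : k + 1 ≤ d) (f g : Fin k → Fin d) :
    ∑ a, antisymStateK d (k + 1) (Fin.cons a f) (Fin.cons a g) = antisymStateK d k f g := by
  have hk : (k : ℂ) + 1 ≠ 0 := k.cast_add_one_ne_zero
  have hpos : (d.choose k : ℂ) ≠ 0 := by exact_mod_cast (Nat.choose_pos (by lia)).ne'
  have hpos₁ : (d.choose (k + 1) : ℂ) ≠ 0 := by exact_mod_cast (Nat.choose_pos hkd).ne'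
  simp only [antisymStateK, Matrix.smul_apply, smul_eq_mul, ← Finset.mul_sum]
  rw [inv_mul_eq_iff_eq_mul₀ hpos₁, ← mul_right_inj' hk, succ_mul_sum_asymProjK_cons]
  field_simp
  linear_combination -asymProjK d k f g * cast_choose_succ_mul (R := ℂ) d k

theorem cons_cons_comp_swap {α : Type*} (a b : α) (e : Fin m → α) :
    (Fin.cons a (Fin.cons b e : Fin (m + 1) → α) : Fin (m + 2) → α) ∘ swap 0 1
      = Fin.cons b (Fin.cons a e : Fin (m + 1) → α) := by
  ext i
  refine Fin.cases ?_ (Fin.cases ?_ fun j => ?_) i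
  · simp
  · simp
  · simp [swap_apply_of_ne_of_ne, Fin.ext_iff]

theorem antisymStateK_cons_cons_swap (a b a' b' : Fin d) (e e' : Fin m → Fin d) :
    antisymStateK d (m + 2) (Fin.cons a (Fin.cons b e)) (Fin.cons a' (Fin.cons b' e'))
      = antisymStateK d (m + 2) (Fin.cons b (Fin.cons a e)) (Fin.cons b' (Fin.cons a' e')) := by
  simp only [antisymStateK, Matrix.smul_apply]
  rw [← asymProjK_comp_perm (swap 0 1), cons_cons_comp_swap, cons_cons_comp_swap]

/-- The identification of `A ⊗ B ⊗ E` with `m + 2` tensor factors, `A` and `B` being the first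
two. -/
def consConsEquiv (α : Type*) (m : ℕ) : (α × α) × (Fin m → α) ≃ (Fin (m + 2) → α) :=
  (prodAssoc _ _ _).trans <|
    ((Equiv.refl α).prodCongr (Fin.consEquiv fun _ => α)).trans (Fin.consEquiv fun _ => α)

/-- The antisymmetric state `P_{m+2}^{(d)} / binom(d,m+2)` as a tripartite state on
`A ⊗ B ⊗ E`. -/
def antisymStateABE (d m : ℕ) :
    Matrix ((Fin d × Fin d) × (Fin m → Fin d)) ((Fin d × Fin d) × (Fin m → Fin d)) ℂ :=
  (antisymStateK d (m + 2)).submatrix (consConsEquiv (Fin d) m) (consConsEquiv (Fin d) m)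

theorem antisymStateABE_apply (a b a' b' : Fin d) (e e' : Fin m → Fin d) :
    antisymStateABE d m ((a, b), e) ((a', b'), e')
      = antisymStateK d (m + 2) (Fin.cons a (Fin.cons b e)) (Fin.cons a' (Fin.cons b' e')) :=
  rfl

theorem sum_fst_antisymStateABE (hmd : m + 2 ≤ d) (b b' : Fin d) (e e' : Fin m → Fin d) :
    ∑ a, antisymStateABE d m ((a, b), e) ((a, b'), e')
      = antisymStateK d (m + 1) (Fin.cons b e) (Fin.cons b' e') := by
  simp only [antisymStateABE_apply, sum_antisymStateK_cons hmd]

theorem sum_snd_antisymStateABE (hmd : m + 2 ≤ d) (a a' : Fin d) (e e' : Fin m → Fin d) :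
    ∑ b, antisymStateABE d m ((a, b), e) ((a', b), e')
      = antisymStateK d (m + 1) (Fin.cons a e) (Fin.cons a' e') := by
  simp only [antisymStateABE_apply, antisymStateK_cons_cons_swap a, sum_antisymStateK_cons hmd]

theorem condMutInfo_antisymStateABE (hmd : m + 2 ≤ d) :
    condMutInfo (antisymStateABE d m)
      = Real.logb 2 ((d.choose (m + 1) : ℝ) ^ 2 / (d.choose m * d.choose (m + 2))) := by
  have hpos {j : ℕ} (hj : j ≤ d) : (d.choose j : ℝ) ≠ 0 := by
    exact_mod_cast (Nat.choose_pos hj).ne'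
  have hpair : vnEntropy (of fun p q : Fin d × (Fin m → Fin d) =>
      antisymStateK d (m + 1) (Fin.cons p.1 p.2) (Fin.cons q.1 q.2))
        = Real.logb 2 (d.choose (m + 1)) :=
    vnEntropy_antisymStateK_submatrix (by lia) (Fin.consEquiv fun _ => Fin d)
  have hE : vnEntropy (of fun e e' => antisymStateK d m e e') = Real.logb 2 (d.choose m) :=
    vnEntropy_antisymStateK_submatrix (by lia) (Equiv.refl _)
  have hABE : vnEntropy (antisymStateABE d m) = Real.logb 2 (d.choose (m + 2)) :=
    vnEntropy_antisymStateK_submatrix hmd (consConsEquiv (Fin d) m)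
  simp only [condMutInfo, sum_fst_antisymStateABE hmd, sum_snd_antisymStateABE hmd,
    sum_antisymStateK_cons (show m + 1 ≤ d by lia), hpair, hABE, hE]
  rw [Real.logb_div (pow_ne_zero 2 (hpos (by lia))) (mul_ne_zero (hpos (by lia)) (hpos hmd)),
    Real.logb_mul (hpos (by lia)) (hpos hmd), Real.logb_pow]
  ring

theorem of_asymProjK_div_choose_eq_antisymStateABE :
    (of fun p q : (Fin d × Fin d) × (Fin m → Fin d) =>
        asymProjK d (m + 2) (Fin.cons p.1.1 (Fin.cons p.1.2 p.2))
            (Fin.cons q.1.1 (Fin.cons q.1.2 q.2)) / (d.choose (m + 2) : ℂ))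
      = antisymStateABE d m := by
  ext p q
  exact div_eq_inv_mul _ _

end AntisymmetricState

/-- for `2 ≤ k ≤ d` (here `k = m + 2`), the state `P_k^{(d)}/binom(d,k)`
with `A`, `B` the first two factors and `E` the remaining `k - 2` factors has
`I(A;B|E) = log₂(binom(d,k-1)²/(binom(d,k-2) binom(d,k))) = log₂((k/(k-1))·((d-k+2)/(d-k+1)))`. -/
theorem cmi_antisym_extension (d m : ℕ) (hk : m + 2 ≤ d) :
    condMutInfo (Matrix.of fun p q : (Fin d × Fin d) × (Fin m → Fin d) =>
        asymProjK d (m + 2) (Fin.cons p.1.1 (Fin.cons p.1.2 p.2))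
            (Fin.cons q.1.1 (Fin.cons q.1.2 q.2)) / (Nat.choose d (m + 2) : ℂ))
      = Real.logb 2 ((Nat.choose d (m + 1) : ℝ) ^ 2 /
          ((Nat.choose d m : ℝ) * (Nat.choose d (m + 2) : ℝ))) ∧
    condMutInfo (Matrix.of fun p q : (Fin d × Fin d) × (Fin m → Fin d) =>
        asymProjK d (m + 2) (Fin.cons p.1.1 (Fin.cons p.1.2 p.2))
            (Fin.cons q.1.1 (Fin.cons q.1.2 q.2)) / (Nat.choose d (m + 2) : ℂ))
      = Real.logb 2 ((((m : ℝ) + 2) / ((m : ℝ) + 1)) *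
          (((d : ℝ) - m) / ((d : ℝ) - m - 1))) := by
  rw [of_asymProjK_div_choose_eq_antisymStateABE, ← choose_sq_div_choose_mul_choose hk,
    and_self]
  exact condMutInfo_antisymStateABE hk

end
end

section
/- For all integers d ≥ 2 and n ≥ 1 and every unit vector ψ in the range of (P_2^{(d)})^{⊗n} ⊆ (ℂ^d ⊗ ℂ^d)^{⊗n}, the reduced density operator ψ_{A^n} := tr_{B^n} |ψ⟩⟨ψ| obtained by tracing out the n second tensor factors satisfies ‖ψ_{A^n}‖_∞ ≤ (3/4)^{n/2}, where ‖·‖_∞ denotes the operator norm. -/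
open scoped BigOperators
open Classical
open scoped ComplexOrder

noncomputable section

/-!
Let `Φ = ψ ⊗ ψ` and let `F` flip the `A` systems of the two copies at one site, so that the purity
`tr ρ²` of the reduced state `ρ` is `⟨Φ, F^{⊗n} Φ⟩`. Flipping only the `A` systems in a subset of
the sites gives the purity of the reduced state on these systems, which is nonnegative; expanding
the tensor power shows `tr ρ² ≤ ⟨Φ, (F + 1/4)^{⊗n} Φ⟩`. As `Φ` lies in the range of `R^{⊗n}` with
`R = P₂ ⊗ P₂`, the flip may be replaced by its compression `R F R`. The spectrum of `R F R` lies in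
`[-1, 1/2]` and the shift by `1/4` centres this interval, so `‖R (F + 1/4) R‖ ≤ 3/4`. Hence
`tr ρ² ≤ (3/4)^n`, and the Frobenius norm `√(tr ρ²)` dominates the operator norm.
-/

section PiKronecker

open Matrix
open scoped Matrix.Norms.L2Operator

variable {ι X Y Z R : Type*} [Fintype ι]

/-- The tensor product `⨂ᵢ Mᵢ` of a family of matrices, as a multilinear function of the family;
its rows and columns are indexed by the product bases `ι → X` and `ι → Y`. -/
def piKronecker [CommSemiring R] :
    MultilinearMap R (fun _ : ι => Matrix X Y R) (Matrix (ι → X) (ι → Y) R) where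
  toFun M := of fun f g => ∏ i, M i (f i) (g i)
  map_update_add' M i A B := by
    ext f g
    exact ((MultilinearMap.mkPiAlgebra R ι R).compLinearMap
      fun j => entryLinearMap R R (f j) (g j)).map_update_add M i A B
  map_update_smul' M i c A := by
    ext f g
    exact ((MultilinearMap.mkPiAlgebra R ι R).compLinearMap
      fun j => entryLinearMap R R (f j) (g j)).map_update_smul M i c A

lemma piKronecker_apply [CommSemiring R] (M : ι → Matrix X Y R) (f : ι → X) (g : ι → Y) :
    piKronecker M f g = ∏ i, M i (f i) (g i) :=
  rfl

lemma piKronecker_mul [CommSemiring R] [DecidableEq ι] [Fintype Y] (M : ι → Matrix X Y R)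
    (N : ι → Matrix Y Z R) :
    piKronecker (fun i => M i * N i) = piKronecker M * piKronecker N := by
  ext f g
  simp only [piKronecker_apply, mul_apply, ← Finset.prod_mul_distrib, Fintype.prod_sum]

lemma conjTranspose_piKronecker [CommSemiring R] [StarRing R] (M : ι → Matrix X Y R) :
    (piKronecker M)ᴴ = piKronecker fun i => (M i)ᴴ := by
  ext f g
  simp only [conjTranspose_apply, piKronecker_apply, star_prod]

lemma piKronecker_permMatrix [CommSemiring R] [DecidableEq X] (σ : ι → Equiv.Perm X) :
    piKronecker (fun i => (σ i).permMatrix R) =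
      Equiv.Perm.permMatrix R (Equiv.piCongrRight σ) := by
  ext f g
  simp [piKronecker_apply, PEquiv.toMatrix_apply, Finset.prod_ite_zero, funext_iff]

lemma piKronecker_one [CommSemiring R] [DecidableEq X] :
    piKronecker (1 : ι → Matrix X X R) = 1 := by
  ext f g
  simp [piKronecker_apply, one_apply, Finset.prod_ite_zero, funext_iff]

lemma piKronecker_const_add_smul_one [CommSemiring R] [DecidableEq ι] [DecidableEq X]
    (A : Matrix X X R) (c : R) :
    piKronecker (fun _ : ι => A + c • 1) =
      ∑ s : Finset ι, c ^ sᶜ.card • piKronecker (s.piecewise (fun _ => A) 1) := by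
  refine (piKronecker.map_add_univ (fun _ => A) fun _ => c • 1).trans
    (Finset.sum_congr rfl fun s _ => ?_)
  rw [← Finset.prod_const, ← piKronecker.map_piecewise_smul]
  congr 1
  funext i
  by_cases hi : i ∈ s <;> simp [hi]

variable [DecidableEq ι] [Fintype X] [DecidableEq X]

/-- The embedding `A ↦ 1 ⊗ ⋯ ⊗ A ⊗ ⋯ ⊗ 1` of the matrix algebra of site `i`. -/
def siteHom (i : ι) : Matrix X X ℂ →⋆ₙₐ[ℂ] Matrix (ι → X) (ι → X) ℂ where
  toFun A := piKronecker (Pi.mulSingle i A)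
  map_smul' c A := piKronecker.map_update_smul 1 i c A
  map_zero' := piKronecker.map_update_zero 1 i
  map_add' A B := piKronecker.map_update_add 1 i A B
  map_mul' A B := by rw [Pi.mulSingle_mul, ← piKronecker_mul]; rfl
  map_star' A := by
    rw [star_eq_conjTranspose, star_eq_conjTranspose, conjTranspose_piKronecker]
    congr 1
    funext j
    exact (Pi.apply_mulSingle (fun _ => conjTranspose) (fun _ => conjTranspose_one) i A j).symm

lemma norm_piKronecker_mulSingle_le (i : ι) (A : Matrix X X ℂ) :
    ‖piKronecker (Pi.mulSingle i A)‖ ≤ ‖A‖ :=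
  NonUnitalStarAlgHom.norm_apply_le (siteHom i) A

lemma norm_piKronecker_le (M : ι → Matrix X X ℂ) : ‖piKronecker M‖ ≤ ∏ i, ‖M i‖ := by
  suffices h : ∀ s : Finset ι, ‖piKronecker (s.piecewise M 1)‖ ≤ ∏ i ∈ s, ‖M i‖ by
    simpa using h Finset.univ
  intro s
  induction s using Finset.induction_on with
  | empty => simpa [piKronecker_one] using (IsStarProjection.one (Matrix (ι → X) (ι → X) ℂ)).norm_le
  | insert i s hi ih =>
    have hsplit : (insert i s).piecewise M 1 =
        fun j => (Pi.mulSingle i (M i) : ι → Matrix X X ℂ) j * s.piecewise M 1 j := by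
      funext j
      obtain rfl | hj := eq_or_ne j i <;> simp [*]
    rw [hsplit, piKronecker_mul, Finset.prod_insert hi]
    exact (norm_mul_le _ _).trans
      (mul_le_mul (norm_piKronecker_mulSingle_le i _) ih (norm_nonneg _) (norm_nonneg _))

end PiKronecker

section SwapTrick

open Matrix

variable {X Y : Type*}

/-- The flip `F` exchanging the first halves of two copies of a bipartite system. -/
def swapFst : Equiv.Perm ((X × Y) × (X × Y)) where
  toFun p := ((p.2.1, p.1.2), (p.1.1, p.2.2))
  invFun p := ((p.2.1, p.1.2), (p.1.1, p.2.2))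
  left_inv _ := rfl
  right_inv _ := rfl

/-- The vector `φ ⊗ φ` consisting of two copies of `φ`. -/
def tensorSq {Z : Type*} (φ : Z → ℂ) : Z × Z → ℂ := fun p => φ p.1 * φ p.2

variable [Fintype X] [Fintype Y]

/-- The purity `tr ρ²` of the reduced state `ρ = tr_Y |ψ⟩⟨ψ|`, as the sum of the squared moduli
of the entries of the Hermitian matrix `ρ`. -/
def purity (ψ : X × Y → ℂ) : ℝ :=
  ∑ x, ∑ z, ‖ptraceSnd (vecMulVec ψ (star ψ)) x z‖ ^ 2

lemma purity_nonneg (ψ : X × Y → ℂ) : 0 ≤ purity ψ := by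
  unfold purity
  positivity

lemma star_tensorSq_dotProduct_comp_swapFst (ψ : X × Y → ℂ) :
    star (tensorSq ψ) ⬝ᵥ (tensorSq ψ ∘ swapFst) = purity ψ := by
  simp only [purity, ← Complex.normSq_eq_norm_sq, Complex.ofReal_sum, ← Complex.mul_conj]
  simp only [dotProduct, tensorSq, swapFst, Fintype.sum_prod_type, ptraceSnd, of_apply,
    vecMulVec_apply, map_sum, Finset.sum_mul_sum, Pi.star_apply, Function.comp_apply,
    Equiv.coe_fn_mk, star_mul', map_mul, RCLike.star_def, RingHomCompTriple.comp_apply,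
    RingHom.id_apply]
  refine Finset.sum_congr rfl fun x _ => ?_
  rw [Finset.sum_comm]
  refine Finset.sum_congr rfl fun z _ => ?_
  rw [Finset.sum_comm]
  refine Finset.sum_congr rfl fun w _ => Finset.sum_congr rfl fun y _ => ?_
  ring

lemma star_tensorSq_dotProduct_comp_of_semiconj {W : Type*} [Fintype W]
    (e : W ≃ (X × Y) × (X × Y)) {σ : Equiv.Perm W} (hσ : Function.Semiconj e σ swapFst)
    (ψ : X × Y → ℂ) :
    star (tensorSq ψ ∘ e) ⬝ᵥ (tensorSq ψ ∘ e ∘ σ) = purity ψ := by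
  have hcomp : tensorSq ψ ∘ e ∘ σ = (tensorSq ψ ∘ swapFst) ∘ e :=
    funext fun w => congrArg (tensorSq ψ) (hσ w)
  rw [hcomp, ← star_tensorSq_dotProduct_comp_swapFst]
  exact comp_equiv_dotProduct_comp_equiv (star (tensorSq ψ)) _ e

lemma sum_norm_sq_tensorSq {Z : Type*} [Fintype Z] (φ : Z → ℂ) :
    ∑ p, ‖tensorSq φ p‖ ^ 2 = (∑ z, ‖φ z‖ ^ 2) ^ 2 := by
  simp only [tensorSq, norm_mul, mul_pow, Fintype.sum_prod_type, sq (∑ z, ‖φ z‖ ^ 2),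
    Finset.sum_mul_sum]

end SwapTrick

section Copies

open Matrix

variable {ι A B : Type*}

/-- Sorts two copies of a bipartite system at every site into two copies of the bipartite system
formed by all sites. -/
def copiesEquiv :
    (ι → (A × B) × (A × B)) ≃ ((ι → A) × (ι → B)) × ((ι → A) × (ι → B)) :=
  (Equiv.arrowProdEquivProdArrow _ _ _).trans
    ((Equiv.arrowProdEquivProdArrow _ _ _).prodCongr (Equiv.arrowProdEquivProdArrow _ _ _))

/-- Moves the `A` systems outside `s` to the second party, so that the first one only holds the
`A` systems in `s`. -/
def splitFst [DecidableEq ι] (s : Finset ι) :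
    (ι → A) × (ι → B) ≃ ({i // i ∈ s} → A) × (({i // i ∉ s} → A) × (ι → B)) :=
  ((Equiv.piEquivPiSubtypeProd (· ∈ s) fun _ => A).prodCongr (Equiv.refl _)).trans
    (Equiv.prodAssoc _ _ _)

/-- Applies the flip `F` at the sites in `s`. -/
def swapFstOn [DecidableEq ι] (s : Finset ι) : Equiv.Perm (ι → (A × B) × (A × B)) :=
  Equiv.piCongrRight (s.piecewise (fun _ => swapFst) 1)

lemma swapFstOn_apply [DecidableEq ι] (s : Finset ι) (f : ι → (A × B) × (A × B)) (i : ι) :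
    swapFstOn s f i = if i ∈ s then swapFst (f i) else f i := by
  by_cases hi : i ∈ s <;> simp [swapFstOn, hi]

lemma semiconj_copiesEquiv_swapFstOn_univ [Fintype ι] [DecidableEq ι] :
    Function.Semiconj (copiesEquiv : (ι → (A × B) × (A × B)) ≃ _) (swapFstOn Finset.univ)
      swapFst := by
  intro f
  ext i <;> simp [copiesEquiv, swapFstOn_apply, swapFst]

lemma semiconj_copiesEquiv_trans_splitFst [DecidableEq ι] (s : Finset ι) :
    Function.Semiconj ((copiesEquiv : (ι → (A × B) × (A × B)) ≃ _).trans
      ((splitFst s).prodCongr (splitFst s))) (swapFstOn s) swapFst := by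
  intro f
  ext i <;>
    simp only [copiesEquiv, splitFst, swapFst, swapFstOn_apply, Equiv.trans_apply,
      Equiv.coe_trans, Equiv.coe_fn_mk, Equiv.coe_refl, Equiv.prodCongr_apply,
      Equiv.prodAssoc_apply, Equiv.arrowProdEquivProdArrow_apply,
      Equiv.piEquivPiSubtypeProd_apply, Prod.map_apply, Function.comp_apply, id_eq] <;>
    grind

lemma piKronecker_piecewise_swapFst [Fintype ι] [DecidableEq ι] [DecidableEq A] [DecidableEq B]
    (s : Finset ι) :
    piKronecker (s.piecewise (fun _ => Equiv.Perm.permMatrix ℂ swapFst) 1) =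
      (swapFstOn s : Equiv.Perm (ι → (A × B) × (A × B))).permMatrix ℂ := by
  rw [swapFstOn, ← piKronecker_permMatrix]
  congr 1
  funext i
  by_cases hi : i ∈ s <;> simp [hi]

variable [Fintype ι] [DecidableEq ι] [Fintype A] [Fintype B]

lemma star_copies_dotProduct_comp_swapFstOn_univ (ψ : (ι → A) × (ι → B) → ℂ) :
    star (tensorSq ψ ∘ copiesEquiv) ⬝ᵥ (tensorSq ψ ∘ copiesEquiv ∘ swapFstOn Finset.univ) =
      purity ψ :=
  star_tensorSq_dotProduct_comp_of_semiconj _ semiconj_copiesEquiv_swapFstOn_univ ψ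

lemma star_copies_dotProduct_comp_swapFstOn (s : Finset ι) (ψ : (ι → A) × (ι → B) → ℂ) :
    star (tensorSq ψ ∘ copiesEquiv) ⬝ᵥ (tensorSq ψ ∘ copiesEquiv ∘ swapFstOn s) =
      purity (ψ ∘ (splitFst s).symm) := by
  have hψ : tensorSq ψ ∘ copiesEquiv = tensorSq (ψ ∘ (splitFst s).symm) ∘
      copiesEquiv.trans ((splitFst s).prodCongr (splitFst s)) := by
    funext f
    simp [tensorSq]
  rw [← Function.comp_assoc, hψ]
  exact star_tensorSq_dotProduct_comp_of_semiconj _ (semiconj_copiesEquiv_trans_splitFst s) _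

lemma sum_norm_sq_copies (ψ : (ι → A) × (ι → B) → ℂ) :
    ∑ f, ‖(tensorSq ψ ∘ copiesEquiv) f‖ ^ 2 = (∑ v, ‖ψ v‖ ^ 2) ^ 2 := by
  rw [← sum_norm_sq_tensorSq]
  exact copiesEquiv.sum_comp fun p => ‖tensorSq ψ p‖ ^ 2

variable [DecidableEq A] [DecidableEq B]

lemma purity_le_re_star_dotProduct_piKronecker (ψ : (ι → A) × (ι → B) → ℂ) {c : ℝ}
    (hc : 0 ≤ c) :
    purity ψ ≤ (star (tensorSq ψ ∘ copiesEquiv) ⬝ᵥ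
      piKronecker (fun _ => Equiv.Perm.permMatrix ℂ swapFst + (c : ℂ) • 1) *ᵥ
        (tensorSq ψ ∘ copiesEquiv)).re := by
  have hexpand : star (tensorSq ψ ∘ copiesEquiv) ⬝ᵥ
      piKronecker (fun _ => Equiv.Perm.permMatrix ℂ swapFst + (c : ℂ) • 1) *ᵥ
        (tensorSq ψ ∘ copiesEquiv) =
      ((∑ s : Finset ι, c ^ sᶜ.card * purity (ψ ∘ (splitFst s).symm) : ℝ) : ℂ) := by
    simp only [piKronecker_const_add_smul_one, piKronecker_piecewise_swapFst, sum_mulVec,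
      smul_mulVec, permMatrix_mulVec, dotProduct_sum, dotProduct_smul, Function.comp_assoc,
      star_copies_dotProduct_comp_swapFstOn, Complex.ofReal_sum, Complex.ofReal_mul,
      Complex.ofReal_pow, smul_eq_mul]
  have huniv : purity (ψ ∘ (splitFst Finset.univ).symm) = purity ψ := by
    exact_mod_cast (star_copies_dotProduct_comp_swapFstOn Finset.univ ψ).symm.trans
      (star_copies_dotProduct_comp_swapFstOn_univ ψ)
  rw [hexpand, Complex.ofReal_re]
  calc purity ψ = c ^ (Finset.univ : Finset ι)ᶜ.card *
        purity (ψ ∘ (splitFst Finset.univ).symm) := by simp [huniv]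
    _ ≤ ∑ s : Finset ι, c ^ sᶜ.card * purity (ψ ∘ (splitFst s).symm) :=
      Finset.single_le_sum (f := fun s : Finset ι => c ^ sᶜ.card * purity (ψ ∘ (splitFst s).symm))
        (fun s _ => mul_nonneg (pow_nonneg hc _) (purity_nonneg _)) (Finset.mem_univ _)

end Copies

section AntisymmetricProjector

open Matrix
open scoped Kronecker Matrix.Norms.L2Operator

lemma kronecker_mulVec_apply {l m n p R : Type*} [CommSemiring R] [Fintype m] [Fintype n]
    (A : Matrix l m R) (B : Matrix p n R) (v : m × n → R) (i : l) (j : p) :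
    ((A ⊗ₖ B) *ᵥ v) (i, j) = (A *ᵥ fun k => (B *ᵥ fun k' => v (k, k')) j) i := by
  simp only [mulVec, dotProduct, kronecker_apply, Fintype.sum_prod_type, Finset.mul_sum, mul_assoc]

lemma kronecker_mulVec_tensorSq {m : Type*} [Fintype m] (A : Matrix m m ℂ) (φ : m → ℂ) :
    (A ⊗ₖ A) *ᵥ tensorSq φ = tensorSq (A *ᵥ φ) := by
  ext ⟨i, j⟩
  simp only [mulVec, dotProduct, tensorSq, kronecker_apply, Fintype.sum_prod_type,
    Finset.sum_mul_sum, mul_mul_mul_comm]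

variable {d : ℕ}

lemma asymProj_eq (d : ℕ) :
    asymProj d = (1 / 2 : ℂ) • (1 - Equiv.Perm.permMatrix ℂ (Equiv.prodComm (Fin d) (Fin d))) := by
  ext ⟨a, b⟩ ⟨a', b'⟩
  simp [asymProj, PEquiv.toMatrix_apply, one_apply, and_comm, eq_comm]

lemma asymProj_mulVec (v : Fin d × Fin d → ℂ) (a b : Fin d) :
    (asymProj d *ᵥ v) (a, b) = 1 / 2 * (v (a, b) - v (b, a)) := by
  simp [asymProj_eq, smul_mulVec, sub_mulVec, permMatrix_mulVec]

lemma isStarProjection_asymProj (d : ℕ) : IsStarProjection (asymProj d) where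
  isIdempotentElem := mulVec_injective <| funext fun v => funext fun ⟨a, b⟩ => by
    rw [← mulVec_mulVec]
    simp only [asymProj_mulVec]
    ring
  isSelfAdjoint := by
    simp [IsSelfAdjoint, star_eq_conjTranspose, asymProj_eq, Equiv.Perm.inv_def]

lemma isStarProjection_kronecker {m n R : Type*} [Fintype m] [Fintype n] [CommSemiring R]
    [StarRing R] {p : Matrix m m R} {q : Matrix n n R} (hp : IsStarProjection p)
    (hq : IsStarProjection q) : IsStarProjection (p ⊗ₖ q) where
  isIdempotentElem := by
    rw [IsIdempotentElem, ← mul_kronecker_mul, hp.isIdempotentElem.eq, hq.isIdempotentElem.eq]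
  isSelfAdjoint := by
    rw [IsSelfAdjoint, star_eq_conjTranspose, conjTranspose_kronecker, ← star_eq_conjTranspose,
      ← star_eq_conjTranspose, hp.isSelfAdjoint.star_eq, hq.isSelfAdjoint.star_eq]

/-- The projector `P₂ ⊗ P₂` on two copies of `ℂ^d ⊗ ℂ^d`. -/
def asymProjSq (d : ℕ) :
    Matrix ((Fin d × Fin d) × (Fin d × Fin d)) ((Fin d × Fin d) × (Fin d × Fin d)) ℂ :=
  asymProj d ⊗ₖ asymProj d

lemma isStarProjection_asymProjSq (d : ℕ) : IsStarProjection (asymProjSq d) :=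
  isStarProjection_kronecker (isStarProjection_asymProj d) (isStarProjection_asymProj d)

lemma asymProjSq_mulVec (v : (Fin d × Fin d) × (Fin d × Fin d) → ℂ) (p q : Fin d × Fin d) :
    (asymProjSq d *ᵥ v) (p, q) =
      1 / 4 * (v (p, q) - v (p.swap, q) - v (p, q.swap) + v (p.swap, q.swap)) := by
  obtain ⟨a, b⟩ := p
  obtain ⟨c, e⟩ := q
  simp only [asymProjSq, kronecker_mulVec_apply, asymProj_mulVec, Prod.swap_prod_mk]
  ring

/-- The compression of the shifted flip `F + 1/4` to the range of `P₂ ⊗ P₂`. -/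
def compressedFlip (d : ℕ) :
    Matrix ((Fin d × Fin d) × (Fin d × Fin d)) ((Fin d × Fin d) × (Fin d × Fin d)) ℂ :=
  asymProjSq d * (Equiv.Perm.permMatrix ℂ swapFst + ((1 / 4 : ℝ) : ℂ) • 1) * asymProjSq d

lemma isSelfAdjoint_compressedFlip (d : ℕ) : IsSelfAdjoint (compressedFlip d) := by
  have hR := (isStarProjection_asymProjSq d).isSelfAdjoint
  have hF : IsSelfAdjoint
      (Equiv.Perm.permMatrix ℂ (swapFst : Equiv.Perm ((Fin d × Fin d) × (Fin d × Fin d)))) :=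
    conjTranspose_permMatrix _
  have hc : IsSelfAdjoint ((1 / 4 : ℝ) : ℂ) := Complex.conj_ofReal _
  have hconj := (hF.add (hc.smul (.one _))).conjugate (asymProjSq d)
  rwa [hR.star_eq] at hconj

-- With `W` the exchange of the two copies, `(R F R)² = (R - 2 R F R + W R) / 4`; the shift by `1/4`
-- completes the square.
lemma compressedFlip_mul_self (d : ℕ) :
    compressedFlip d * compressedFlip d = (5 / 16 : ℂ) • asymProjSq d +
      (1 / 4 : ℂ) • (Equiv.Perm.permMatrix ℂ (Equiv.prodComm _ _) * asymProjSq d) := by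
  refine mulVec_injective (funext fun v => funext fun ⟨⟨a, b⟩, ⟨c, e⟩⟩ => ?_)
  simp only [compressedFlip, ← mulVec_mulVec, add_mulVec, smul_mulVec, one_mulVec,
    permMatrix_mulVec, asymProjSq_mulVec, Pi.add_apply, Pi.smul_apply, Function.comp_apply,
    smul_eq_mul, swapFst, Equiv.coe_fn_mk, Equiv.prodComm_apply, Prod.swap_prod_mk]
  push_cast
  ring

lemma norm_compressedFlip_le (d : ℕ) : ‖compressedFlip d‖ ≤ 3 / 4 := by
  have hR : ‖asymProjSq d‖ ≤ 1 := (isStarProjection_asymProjSq d).norm_le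
  have hWR : ‖Equiv.Perm.permMatrix ℂ (Equiv.prodComm _ _) * asymProjSq d‖ ≤ 1 :=
    (norm_mul_le _ _).trans (mul_le_one₀ (permMatrix_l2_opNorm_le _) (norm_nonneg _) hR)
  refine le_of_sq_le_sq ?_ (by norm_num)
  calc ‖compressedFlip d‖ ^ 2 = ‖compressedFlip d * compressedFlip d‖ :=
        (isSelfAdjoint_compressedFlip d).norm_mul_self.symm
    _ ≤ ‖(5 / 16 : ℂ)‖ * ‖asymProjSq d‖ +
          ‖(1 / 4 : ℂ)‖ * ‖Equiv.Perm.permMatrix ℂ (Equiv.prodComm _ _) * asymProjSq d‖ := by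
        rw [compressedFlip_mul_self, ← norm_smul, ← norm_smul]
        exact norm_add_le _ _
    _ ≤ 5 / 16 * 1 + 1 / 4 * 1 := by
        norm_num only [norm_div, Complex.norm_ofNat, norm_one]
        linarith
    _ = (3 / 4) ^ 2 := by norm_num

end AntisymmetricProjector

section PurityBound

open Matrix
open scoped Kronecker Matrix.Norms.L2Operator

lemma star_dotProduct_conjugate_mulVec {m R : Type*} [Fintype m] [CommSemiring R] [StarRing R]
    {Q : Matrix m m R} (hQ : Q.IsHermitian) {v : m → R} (hv : Q *ᵥ v = v) (M : Matrix m m R) :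
    star v ⬝ᵥ (Q * M * Q) *ᵥ v = star v ⬝ᵥ M *ᵥ v := by
  have hstar : star v ᵥ* Q = star v := by
    conv_lhs => rw [← hQ.eq, ← star_mulVec, hv]
  rw [← mulVec_mulVec, hv, ← mulVec_mulVec, dotProduct_mulVec, hstar]

lemma norm_star_dotProduct_mulVec_le {m 𝕜 : Type*} [Fintype m] [DecidableEq m] [RCLike 𝕜]
    (M : Matrix m m 𝕜) (v : m → 𝕜) :
    ‖star v ⬝ᵥ M *ᵥ v‖ ≤ ‖M‖ * ∑ i, ‖v i‖ ^ 2 := by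
  have hinner := norm_inner_le_norm (𝕜 := 𝕜) (WithLp.toLp 2 v) (WithLp.toLp 2 (M *ᵥ v))
  rw [EuclideanSpace.inner_toLp_toLp, dotProduct_comm] at hinner
  calc ‖star v ⬝ᵥ M *ᵥ v‖ ≤ ‖WithLp.toLp 2 v‖ * ‖WithLp.toLp 2 (M *ᵥ v)‖ := hinner
    _ ≤ ‖WithLp.toLp 2 v‖ * (‖M‖ * ‖WithLp.toLp 2 v‖) := by
        gcongr
        exact l2_opNorm_mulVec M (WithLp.toLp 2 v)
    _ = ‖M‖ * ∑ i, ‖v i‖ ^ 2 := by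
        rw [mul_left_comm, ← sq, EuclideanSpace.norm_sq_eq]

variable {d n : ℕ}

lemma piKronecker_asymProjSq (d n : ℕ) :
    piKronecker (fun _ : Fin n => asymProjSq d) =
      (asymPow d n ⊗ₖ asymPow d n).submatrix copiesEquiv copiesEquiv := by
  ext f g
  simp only [piKronecker_apply, asymProjSq, kroneckerMap_apply, Finset.prod_mul_distrib]
  rfl

lemma piKronecker_asymProjSq_mulVec_tensorSq {ψ : (Fin n → Fin d) × (Fin n → Fin d) → ℂ}
    (hψ : asymPow d n *ᵥ ψ = ψ) :
    piKronecker (fun _ => asymProjSq d) *ᵥ (tensorSq ψ ∘ copiesEquiv) =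
      tensorSq ψ ∘ copiesEquiv := by
  rw [piKronecker_asymProjSq, submatrix_mulVec_equiv, Function.comp_assoc,
    Equiv.self_comp_symm, Function.comp_id, kronecker_mulVec_tensorSq, hψ]

lemma purity_le_of_asymPow_mulVec_eq {ψ : (Fin n → Fin d) × (Fin n → Fin d) → ℂ}
    (hψ : asymPow d n *ᵥ ψ = ψ) :
    purity ψ ≤ (3 / 4) ^ n * (∑ v, ‖ψ v‖ ^ 2) ^ 2 := by
  have hQ : (piKronecker fun _ : Fin n => asymProjSq d).IsHermitian := by
    rw [IsHermitian, conjTranspose_piKronecker]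
    exact congrArg piKronecker
      (funext fun _ => (isStarProjection_asymProjSq d).isSelfAdjoint.star_eq)
  have hnorm : ‖piKronecker fun _ : Fin n => compressedFlip d‖ ≤ (3 / 4) ^ n :=
    (norm_piKronecker_le _).trans <| by
      simpa using pow_le_pow_left₀ (norm_nonneg _) (norm_compressedFlip_le d) n
  set Φ := tensorSq ψ ∘ copiesEquiv
  calc purity ψ
      ≤ (star Φ ⬝ᵥ piKronecker (fun _ =>
          Equiv.Perm.permMatrix ℂ swapFst + ((1 / 4 : ℝ) : ℂ) • 1) *ᵥ Φ).re :=
        purity_le_re_star_dotProduct_piKronecker ψ (by norm_num)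
    _ = (star Φ ⬝ᵥ piKronecker (fun _ => compressedFlip d) *ᵥ Φ).re := by
        simp only [compressedFlip, piKronecker_mul]
        rw [star_dotProduct_conjugate_mulVec hQ (piKronecker_asymProjSq_mulVec_tensorSq hψ)]
    _ ≤ ‖piKronecker fun _ : Fin n => compressedFlip d‖ * ∑ f, ‖Φ f‖ ^ 2 :=
        (Complex.re_le_norm _).trans (norm_star_dotProduct_mulVec_le _ Φ)
    _ ≤ (3 / 4) ^ n * (∑ v, ‖ψ v‖ ^ 2) ^ 2 := by
        rw [← sum_norm_sq_copies]
        exact mul_le_mul_of_nonneg_right hnorm (by positivity)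

end PurityBound

section FrobeniusNorm

open Matrix
open scoped Matrix.Norms.Frobenius

lemma opNorm_le_sqrt_sum_norm_sq {m : Type*} [Fintype m] [DecidableEq m] (M : Matrix m m ℂ) :
    opNorm M ≤ √(∑ a, ∑ c, ‖M a c‖ ^ 2) := by
  have hfrob : ‖M‖ = √(∑ a, ∑ c, ‖M a c‖ ^ 2) := by
    simp [frobenius_norm_def, Real.sqrt_eq_rpow]
  rw [← hfrob]
  refine ContinuousLinearMap.opNorm_le_bound _ (norm_nonneg M) fun x => ?_
  have hmul := frobenius_norm_mul M (replicateCol Unit x.ofLp)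
  rw [← replicateCol_mulVec, frobenius_norm_replicateCol, frobenius_norm_replicateCol] at hmul
  exact hmul

end FrobeniusNorm

/-- for every unit vector `ψ` in the range of `(P₂^{(d)})^{⊗n}`, the
reduced state `ψ_{A^n} = tr_{B^n} |ψ⟩⟨ψ|` satisfies `‖ψ_{A^n}‖_∞ ≤ (3/4)^{n/2}`. -/
theorem opNorm_reduced_antisym_le (d n : ℕ) (hd : 2 ≤ d) (hn : 1 ≤ n)
    (ψ : (Fin n → Fin d) × (Fin n → Fin d) → ℂ)
    (hψ : ∑ v, Complex.normSq (ψ v) = 1)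
    (hrange : (asymPow d n).mulVec ψ = ψ) :
    opNorm (ptraceSnd (Matrix.vecMulVec ψ (star ψ))) ≤ Real.sqrt ((3 / 4 : ℝ) ^ n) := by
  refine (opNorm_le_sqrt_sum_norm_sq _).trans (Real.sqrt_le_sqrt ?_)
  have hpurity := purity_le_of_asymPow_mulVec_eq hrange
  simp only [← Complex.normSq_eq_norm_sq, hψ, one_pow, mul_one] at hpurity
  exact hpurity

end
end
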